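/- The minimal non-faces of the r-independence complex Ind_r(G) of a finite simple graph G are exactly the (r+1)-subsets A of V(G) such that the induced subgraph G[A] is connected; equivalently, the Stanley–Reisner ideal of Ind_r(G) is generated by the square-free monomials x_A over all (r+1)-subsets A with G[A] connected. -/

import Mathlib

/-- A set `W` of vertices is `r`-independent in `G` if every connected component
of the induced subgraph `G[W]` has at most `r` vertices. -/
def SimpleGraph.IsRIndepSet {V : Type*} (G : SimpleGraph V) (r : ℕ) (W : Set V) : Prop :=
  ∀ c : (G.induce W).ConnectedComponent, c.supp.ncard ≤ r

/-!
A set fails to be `r`-independent exactly when it contains a connected set with more than `r`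
vertices. Deleting a suitable vertex of a connected graph with at least two vertices leaves it
connected, so such a connected set shrinks to one with exactly `r + 1` vertices. Hence the non-faces
of `Ind_r(G)` form the upper closure of the family of connected `(r + 1)`-sets. Sets of equal size
form an antichain, and an antichain is the set of minimal elements of its upper closure.
-/

open SimpleGraph

section ConnectedInduce

variable {V V' : Type*} {G : SimpleGraph V} {G' : SimpleGraph V'}

lemma connected_induce_image (f : G →g G') {s : Set V} (hs : (G.induce s).Connected) :
    (G'.induce (f '' s)).Connected := by
  refine hs.map (induceHom f (Set.mapsTo_image f s)) ?_
  rintro ⟨_, v, hv, rfl⟩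
  exact ⟨⟨v, hv⟩, rfl⟩

lemma exists_connected_induce_erase [DecidableEq V] {C : Finset V}
    (hC : (G.induce (C : Set V)).Connected) (hnt : C.Nontrivial) :
    ∃ v ∈ C, (G.induce (C.erase v : Set V)).Connected := by
  have : Nontrivial (C : Set V) := hnt.coe_sort
  obtain ⟨v, hv⟩ := hC.exists_connected_induce_compl_singleton_of_finite_nontrivial
  have himage : Embedding.induce (G := G) (C : Set V) '' {v}ᶜ = (C.erase v : Set V) := by
    aesop
  exact ⟨v, v.2, himage ▸ connected_induce_image (Embedding.induce (C : Set V)).toHom hv⟩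

/-- The family of `k`-element sets of vertices inducing a connected subgraph of `G`; for `k = r + 1`
these index the monomials generating the Stanley–Reisner ideal of the `r`-independence complex.
Finsets exclude the junk value `0` that `Set.ncard` takes on infinite sets. -/
def connectedFinsets (G : SimpleGraph V) (k : ℕ) : Set (Finset V) :=
  {C | C.card = k ∧ (G.induce (C : Set V)).Connected}

lemma isAntichain_connectedFinsets (G : SimpleGraph V) (k : ℕ) :
    IsAntichain (· ≤ ·) (connectedFinsets G k) :=
  Set.Sized.isAntichain fun _ hC ↦ hC.1

lemma exists_mem_connectedFinsets_subset {C : Finset V} {k : ℕ}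
    (hC : (G.induce (C : Set V)).Connected) (hk : k ≠ 0) (hkC : k ≤ C.card) :
    ∃ D ∈ connectedFinsets G k, D ⊆ C := by
  classical
  induction C using Finset.strongInduction with
  | H C ih =>
    obtain rfl | hlt := hkC.eq_or_lt
    · exact ⟨C, ⟨rfl, hC⟩, subset_rfl⟩
    · have hnt : C.Nontrivial := Finset.one_lt_card_iff_nontrivial.mp (by lia)
      obtain ⟨v, hvC, hv⟩ := exists_connected_induce_erase hC hnt
      have hcard : k ≤ (C.erase v).card := by
        rw [Finset.card_erase_of_mem hvC]
        exact Nat.le_sub_one_of_lt hlt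
      obtain ⟨D, hD, hDC⟩ := ih (C.erase v) (Finset.erase_ssubset hvC) hv hcard
      exact ⟨D, hD, hDC.trans (C.erase_subset v)⟩

end ConnectedInduce

section RIndepSet

variable {V : Type*} {G : SimpleGraph V} {r : ℕ} {W C : Finset V}

lemma card_le_of_isRIndepSet (hW : G.IsRIndepSet r (W : Set V)) (hCW : C ⊆ W)
    (hC : (G.induce (C : Set V)).Connected) : C.card ≤ r := by
  obtain ⟨v⟩ := hC.nonempty
  let ι := G.induceHomOfLE (Finset.coe_subset.mpr hCW)
  let K := (G.induce (W : Set V)).connectedComponentMk (ι v)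
  have hK : Set.range ι ⊆ K.supp := by
    rintro _ ⟨u, rfl⟩
    exact ConnectedComponent.sound ((hC.preconnected u v).map ι.toHom)
  calc C.card = (Set.range ι).ncard := by
        rw [Set.ncard_range_of_injective ι.injective, Nat.card_coe_set_eq, Set.ncard_coe_finset]
    _ ≤ K.supp.ncard := Set.ncard_le_ncard hK
    _ ≤ r := hW K

lemma exists_connected_induce_of_not_isRIndepSet (hW : ¬ G.IsRIndepSet r (W : Set V)) :
    ∃ C ⊆ W, r < C.card ∧ (G.induce (C : Set V)).Connected := by
  classical
  obtain ⟨K, hK⟩ : ∃ K : (G.induce (W : Set V)).ConnectedComponent, r < K.supp.ncard := by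
    simpa only [IsRIndepSet, not_forall, not_le] using hW
  let ι := Embedding.induce (G := G) (W : Set V)
  refine ⟨(ι '' K.supp).toFinset, ?_, ?_, ?_⟩
  · rw [Set.toFinset_subset]
    exact Subtype.coe_image_subset _ _
  · rwa [← Set.ncard_eq_toFinset_card', Set.ncard_image_of_injective _ ι.injective]
  · rw [Set.coe_toFinset]
    exact connected_induce_image ι.toHom K.connected_toSimpleGraph

lemma not_isRIndepSet_iff_mem_upperClosure :
    ¬ G.IsRIndepSet r (W : Set V) ↔ W ∈ upperClosure (connectedFinsets G (r + 1)) := by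
  rw [mem_upperClosure]
  constructor
  · intro hW
    obtain ⟨C, hCW, hrC, hC⟩ := exists_connected_induce_of_not_isRIndepSet hW
    obtain ⟨D, hD, hDC⟩ := exists_mem_connectedFinsets_subset hC r.succ_ne_zero hrC
    exact ⟨D, hD, hDC.trans hCW⟩
  · rintro ⟨C, ⟨hcard, hC⟩, hCW⟩ hW
    have := card_le_of_isRIndepSet hW hCW hC
    lia

end RIndepSet

theorem stmt16_general {V : Type*} (G : SimpleGraph V) (r : ℕ) (A : Finset V) :
    (¬ G.IsRIndepSet r (A : Set V) ∧
        ∀ B : Finset V, B ⊂ A → G.IsRIndepSet r (B : Set V)) ↔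
      (A.card = r + 1 ∧ (G.induce (A : Set V)).Connected) := by
  calc
    _ ↔ Minimal (fun B : Finset V ↦ ¬ G.IsRIndepSet r (B : Set V)) A := by
      simp only [minimal_iff_forall_lt, not_not]
    _ ↔ Minimal (· ∈ upperClosure (connectedFinsets G (r + 1))) A := by
      simp only [not_isRIndepSet_iff_mem_upperClosure]
    _ ↔ A ∈ connectedFinsets G (r + 1) :=
      (isAntichain_connectedFinsets G (r + 1)).minimal_mem_upperClosure_iff_mem

/-- The minimal non-faces of `Ind_r(G)` are exactly the `(r+1)`-subsets `A` of
`V(G)` with `G[A]` connected; equivalently, the Stanley–Reisner ideal of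
`Ind_r(G)` is generated by the squarefree monomials `x_A` over such `A`. -/
theorem stmt16 {V : Type*} [Fintype V] [DecidableEq V] (G : SimpleGraph V)
    (r : ℕ) (hr : 1 ≤ r) (A : Finset V) :
    (¬ G.IsRIndepSet r (A : Set V) ∧
        ∀ B : Finset V, B ⊂ A → G.IsRIndepSet r (B : Set V)) ↔
      (A.card = r + 1 ∧ (G.induce (A : Set V)).Connected) :=
  stmt16_general G r A
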